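/- arXiv:math/0701488 — 2 statements merged into one kernel-verified Lean document; each statement's English description precedes it below -/
import Mathlib

section
/- In any t-Mcycle of [n], every element of [n] occurs the same number of times among the characters a₀, …, a_{m−1}; namely, each element of [n] occurs exactly C(n+t−1, t)/n times. -/
/-- A `t`-Mcycle of `[n]`: a cyclic sequence of length `m = C(n+t-1, t)` of elements of
`[n]` (modeled as `Fin n`) such that every multiset of size `t` over `[n]` appears
exactly once among the `m` cyclic windows of length `t`. -/
def IsMcycle (n t : ℕ) (a : ZMod ((n + t - 1).choose t) → Fin n) : Prop :=
  ∀ s : Multiset (Fin n), Multiset.card s = t →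
    ∃! i : ZMod ((n + t - 1).choose t),
      (Multiset.range t).map (fun j => a (i + (j : ZMod ((n + t - 1).choose t)))) = s

/-!
Count the pairs (window, position in the window) at which a letter `x` occurs. Each occurrence of
`x` takes each of the `t` positions in exactly one window, so there are `t` times as many pairs as
occurrences. On the other hand, the windows run through all multisets of size `t`, a family
invariant under exchanging two letters, so the number of pairs is the same for every letter.
-/

theorem sum_count_sym_eq {α : Type*} [DecidableEq α] (t : ℕ) [Fintype (Sym α t)] (x y : α) :
    ∑ s : Sym α t, (s : Multiset α).count x = ∑ s : Sym α t, (s : Multiset α).count y := by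
  refine Fintype.sum_equiv (Sym.equivCongr (Equiv.swap x y)) _ _ fun s => ?_
  have h := Multiset.count_map_eq_count' (Equiv.swap x y) s (Equiv.swap x y).injective x
  rw [Equiv.swap_apply_left] at h
  exact h.symm

theorem sum_natCard_fiber {ι α : Type*} [Finite ι] [Fintype α] (a : ι → α) :
    ∑ y, Nat.card {i // a i = y} = Nat.card ι := by
  rw [← Nat.card_sigma, Nat.card_congr (Equiv.sigmaFiberEquiv a)]

section Window

variable {G α : Type*} [AddGroup G]

/-- The window of shape `J` at position `i` of a labelling `a` of a group: the multiset of the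
labels on the translate `i + J`. A window of length `t` in a cyclic sequence of length `m` is the
case `G = ZMod m`, `J = {0, …, t - 1}`; as `J` is a multiset, `t` may exceed `m`. -/
def window (a : G → α) (J : Multiset G) (i : G) : Sym α J.card :=
  ⟨J.map fun j => a (i + j), Multiset.card_map _ _⟩

theorem coe_window (a : G → α) (J : Multiset G) (i : G) :
    (window a J i : Multiset α) = J.map fun j => a (i + j) :=
  rfl

theorem sum_count_window [Fintype G] [DecidableEq α] (a : G → α) (J : Multiset G) (x : α) :
    ∑ i, (window a J i : Multiset α).count x = J.card * Nat.card {i // a i = x} := by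
  simp only [coe_window]
  induction J using Multiset.induction_on with
  | empty => simp
  | cons j J ih =>
    have translate : ∑ i, (if x = a (i + j) then 1 else 0) = Nat.card {i // a i = x} := by
      refine (Equiv.sum_comp (Equiv.addRight j) fun i => if x = a i then 1 else 0).trans ?_
      simp [Fintype.card_subtype, eq_comm]
    simp only [Multiset.map_cons, Multiset.count_cons, Finset.sum_add_distrib, ih, translate,
      Multiset.card_cons, add_one_mul]

variable {a : G → α} {J : Multiset G}

theorem natCard_fiber_eq_of_bijective_window [Finite G] (hJ : J ≠ 0)
    (h : Function.Bijective (window a J)) (x y : α) :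
    Nat.card {i // a i = x} = Nat.card {i // a i = y} := by
  classical
  have := Fintype.ofFinite G
  have := Fintype.ofBijective _ h
  refine Nat.eq_of_mul_eq_mul_left (Multiset.card_pos.2 hJ) ?_
  calc J.card * Nat.card {i // a i = x}
      = ∑ i, (window a J i : Multiset α).count x := (sum_count_window a J x).symm
    _ = ∑ s : Sym α J.card, (s : Multiset α).count x := h.sum_comp fun s => (s : Multiset α).count x
    _ = ∑ s : Sym α J.card, (s : Multiset α).count y := sum_count_sym_eq _ x y
    _ = ∑ i, (window a J i : Multiset α).count y :=
        (h.sum_comp fun s => (s : Multiset α).count y).symm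
    _ = J.card * Nat.card {i // a i = y} := sum_count_window a J y

theorem mcycle_equal_occurrences_general [Finite α] (hJ : J ≠ 0)
    (h : Function.Bijective (window a J)) (x : α) :
    Nat.card α * Nat.card {i // a i = x} = Nat.card G := by
  classical
  have := Fintype.ofFinite α
  have : Finite G := Finite.of_injective _ h.injective
  calc Nat.card α * Nat.card {i // a i = x}
      = ∑ _y : α, Nat.card {i // a i = x} := by simp
    _ = ∑ y, Nat.card {i // a i = y} :=
        Finset.sum_congr rfl fun y _ => natCard_fiber_eq_of_bijective_window hJ h x y
    _ = Nat.card G := sum_natCard_fiber a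

end Window

theorem IsMcycle.bijective_window {n t : ℕ} {a : ZMod ((n + t - 1).choose t) → Fin n}
    (h : IsMcycle n t a) :
    Function.Bijective (window a ((Multiset.range t).map (↑))) := by
  refine (Function.bijective_iff_existsUnique _).2 fun s => ?_
  simpa [← Sym.coe_inj, coe_window] using h s (by simp)

theorem mcycle_equal_occurrences (n t : ℕ) (hn : 0 < n) (ht : 0 < t)
    (a : ZMod ((n + t - 1).choose t) → Fin n) (h : IsMcycle n t a) (x : Fin n) :
    Nat.card {i : ZMod ((n + t - 1).choose t) // a i = x} = (n + t - 1).choose t / n := by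
  refine Nat.eq_div_of_mul_eq_right hn.ne' ?_
  have shape_ne_zero : (Multiset.range t).map ((↑) : ℕ → ZMod ((n + t - 1).choose t)) ≠ 0 := by
    simpa [← Multiset.card_pos] using ht
  simpa using mcycle_equal_occurrences_general shape_ne_zero h.bijective_window x
end

section
/- For every integer n ≥ 11 with gcd(n, 6) = 1, a 6-Mcycle of [n] exists. -/
section EulerCircuit

variable {E V : Type*}

open Equiv Relation

theorem sameCycle_of_forall_sameCycle_apply {σ ρ : Perm E} (h : ∀ z, ρ.SameCycle z (σ z))
    {x y : E} (hxy : σ.SameCycle x y) : ρ.SameCycle x y := by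
  obtain ⟨k, rfl⟩ := hxy
  induction k with
  | zero => exact .rfl
  | succ k ih =>
    rw [add_comm, zpow_one_add, Perm.mul_apply]
    exact ih.trans (h _)
  | pred k ih =>
    have hz := h ((σ ^ (-k - 1 : ℤ)) x)
    rw [← Perm.mul_apply, ← zpow_one_add, add_sub_cancel] at hz
    exact ih.trans hz.symm

variable [Finite E]

theorem sameCycle_swap_mul_self [DecidableEq E] {σ : Perm E} {e e' : E} (h : ¬ σ.SameCycle e e') :
    (swap e e' * σ).SameCycle e e' := by
  -- Up to the return to `e`, the orbits of `e` under `σ` and `swap e e' * σ` agree.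
  have orbit_subset (k : ℕ) : (swap e e' * σ).SameCycle e ((σ ^ k) e) := by
    induction k with
    | zero => exact .rfl
    | succ k ih =>
      by_cases he : (σ ^ (k + 1)) e = e
      · rw [he]
      have he' : (σ ^ (k + 1)) e ≠ e' := fun hk ↦ h ⟨(k + 1 : ℕ), by rwa [zpow_natCast]⟩
      rw [← swap_apply_of_ne_of_ne he he', pow_succ', Perm.mul_apply]
      exact Perm.sameCycle_apply_right.2 ih
  obtain ⟨k, -, hk⟩ : ∃ k < orderOf σ, (σ ^ k) e = σ⁻¹ e :=
    Perm.SameCycle.exists_pow_eq' ⟨-1, by simp⟩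
  simpa [hk] using Perm.sameCycle_apply_right.2 (orbit_subset k)

theorem sameCycle_swap_mul [DecidableEq E] {σ : Perm E} {e e' : E} (h : ¬ σ.SameCycle e e')
    {x y : E} (hxy : σ.SameCycle x y) : (swap e e' * σ).SameCycle x y := by
  refine sameCycle_of_forall_sameCycle_apply (fun z ↦ ?_) hxy
  have hz : (swap e e' * σ).SameCycle z (swap e e' (σ z)) := Perm.sameCycle_apply_right.2 .rfl
  have hswap : (swap e e' * σ).SameCycle e e' := sameCycle_swap_mul_self h
  rw [swap_apply_def] at hz
  split_ifs at hz with he he'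
  · exact he ▸ hz.trans hswap.symm
  · exact he' ▸ hz.trans hswap
  · exact hz

theorem exists_perm_sameCycle_of_tail_eq (tail : E → V) (τ : Perm E) :
    ∃ σ : Perm E, (∀ e, tail (σ e) = tail (τ e)) ∧
      ∀ e e', tail e = tail e' → σ.SameCycle e e' := by
  classical
  -- Composing with `swap e e'` only merges cycles, so take `σ` with the coarsest cycle partition.
  obtain ⟨σ, hσ, hmax⟩ := Set.Finite.exists_maximalFor Perm.SameCycle.setoid
    {σ : Perm E | ∀ e, tail (σ e) = tail (τ e)} (Set.toFinite _) ⟨τ, fun _ ↦ rfl⟩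
  refine ⟨σ, hσ, fun e e' htail ↦ by_contra fun hne ↦ hne ?_⟩
  have hswap : ∀ x, tail (swap e e' x) = tail x := by
    intro x
    rw [swap_apply_def]
    split_ifs with he he' <;> simp_all
  exact hmax (j := swap e e' * σ) (fun x ↦ (hswap _).trans (hσ x))
    (fun _ _ ↦ sameCycle_swap_mul hne) (sameCycle_swap_mul_self hne)

theorem exists_bijective_zmod_of_sameCycle [Nonempty E] {m : ℕ} (hm : Nat.card E = m) {σ : Perm E}
    (hσ : ∀ e e', σ.SameCycle e e') :
    ∃ F : ZMod m → E, F.Bijective ∧ ∀ i, F (i + 1) = σ (F i) := by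
  have := Fintype.ofFinite E
  have : NeZero m := ⟨hm ▸ Nat.card_pos.ne'⟩
  obtain ⟨e₀⟩ := ‹Nonempty E›
  have hcycle : σ.IsCycleOn (Finset.univ : Finset E) :=
    ⟨by simp, fun e _ e' _ ↦ hσ e e'⟩
  have hpow {k l : ℕ} : (σ ^ k) e₀ = (σ ^ l) e₀ ↔ (k : ZMod m) = l := by
    rw [hcycle.pow_apply_eq_pow_apply (Finset.mem_univ _), Finset.card_univ,
      ← Nat.card_eq_fintype_card, hm, ZMod.natCast_eq_natCast_iff]
  refine ⟨fun i ↦ (σ ^ i.val) e₀, ⟨fun i j hij ↦ by simpa using hpow.1 hij, fun e ↦ ?_⟩,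
    fun i ↦ ?_⟩
  · obtain ⟨k, -, rfl⟩ := hcycle.exists_pow_eq (Finset.mem_univ e₀) (Finset.mem_univ e)
    exact ⟨k, hpow.2 (by simp)⟩
  · rw [← Perm.mul_apply, ← pow_succ', hpow]
    simp

theorem exists_eulerCircuit [Nonempty E] {tail head : E → V} (τ : Perm E)
    (hτ : ∀ e, tail (τ e) = head e)
    (hconn : ∀ e e', EqvGen (fun u w ↦ ∃ e, tail e = u ∧ head e = w) (tail e) (tail e'))
    {m : ℕ} (hm : Nat.card E = m) :
    ∃ F : ZMod m → E, F.Bijective ∧ ∀ i, tail (F (i + 1)) = head (F i) := by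
  obtain ⟨σ, hστ, htail⟩ := exists_perm_sameCycle_of_tail_eq tail τ
  have hsame {u w : V} (huw : EqvGen (fun u w ↦ ∃ e, tail e = u ∧ head e = w) u w) (x : E) :
      (∃ e, tail e = u ∧ σ.SameCycle x e) ↔ ∃ e, tail e = w ∧ σ.SameCycle x e := by
    induction huw with
    | rel u w h =>
      obtain ⟨e, rfl, rfl⟩ := h
      constructor <;> rintro ⟨e', he', hx⟩
      · exact ⟨σ e, (hστ e).trans (hτ e),
          Perm.sameCycle_apply_right.2 (hx.trans (htail _ _ he'))⟩
      · refine ⟨e, rfl, Perm.sameCycle_apply_right.1 (hx.trans (htail _ _ ?_))⟩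
        rw [he', hστ, hτ]
    | refl => rfl
    | symm _ _ _ ih => exact ih.symm
    | trans _ _ _ _ _ ih ih' => exact ih.trans ih'
  obtain ⟨F, hF, hsucc⟩ := exists_bijective_zmod_of_sameCycle hm fun e e' ↦ by
    obtain ⟨e'', he'', h⟩ := (hsame (hconn e e') e).1 ⟨e, rfl, .rfl⟩
    exact h.trans (htail _ _ he'')
  exact ⟨F, hF, fun i ↦ by rw [hsucc, hστ, hτ]⟩

end EulerCircuit

section WalkPoints

/-- The points visited by the walk that starts at `x` and makes the steps listed in `c`. The
endpoint `x + c.sum` is left out, so that a closed walk does not visit its starting point twice. -/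
def walkPoints {M : Type*} [AddMonoidWithOne M] (x : M) : List ℕ → Multiset M
  | [] => 0
  | a :: c => x ::ₘ walkPoints (x + a) c

section AddMonoidWithOne

variable {M : Type*} [AddMonoidWithOne M]

@[simp]
theorem card_walkPoints (x : M) (c : List ℕ) : (walkPoints x c).card = c.length := by
  induction c generalizing x with
  | nil => rfl
  | cons a c ih => simp [walkPoints, ih]

theorem walkPoints_append (x : M) (p q : List ℕ) :
    walkPoints x (p ++ q) = walkPoints x p + walkPoints (x + p.sum) q := by
  induction p generalizing x with
  | nil => simp [walkPoints]
  | cons a p ih => simp [walkPoints, ih, add_assoc]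

theorem start_mem_walkPoints (x : M) {c : List ℕ} (hc : c ≠ []) : x ∈ walkPoints x c := by
  obtain ⟨a, c, rfl⟩ := List.exists_cons_of_ne_nil hc
  exact Multiset.mem_cons_self _ _

theorem map_natCast_walkPoints (y : ℕ) (c : List ℕ) :
    (walkPoints y c).map (Nat.cast : ℕ → M) = walkPoints (y : M) c := by
  induction c generalizing y with
  | nil => rfl
  | cons a c ih => simp [walkPoints, ih]

theorem map_range_eq_walkPoints {x : ℕ → M} {l : ℕ → List ℕ}
    (hx : ∀ k, x (k + 1) = x k + (l k).headD 0) (hl : ∀ k, (l (k + 1)).dropLast = (l k).tail)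
    {k : ℕ} {p : List ℕ} (hp : p <+: l k) (f : ℕ) :
    (Multiset.range (p.length + 1)).map (fun j ↦ x (k + j)) = walkPoints (x k) (p ++ [f]) := by
  induction p generalizing k with
  | nil => simp [walkPoints]
  | cons a p ih =>
    obtain ⟨r, hr⟩ := hp
    have hp' : p <+: l (k + 1) :=
      List.IsPrefix.trans ⟨r, by rw [hl, ← hr]; rfl⟩ (List.dropLast_prefix _)
    have hstart : x (k + 1) = x k + a := by rw [hx, ← hr]; rfl
    have hrange : Multiset.range (p.length + 1 + 1) =
        0 ::ₘ (Multiset.range (p.length + 1)).map Nat.succ := by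
      simp only [Multiset.range, List.range_succ_eq_map (n := p.length + 1)]
      rfl
    rw [List.length_cons, hrange, Multiset.map_cons, Multiset.map_map, List.cons_append, walkPoints,
      ← hstart, ← ih hp']
    simp [add_assoc, add_comm 1]

end AddMonoidWithOne

section Nat

theorem le_of_mem_walkPoints {y v : ℕ} {c : List ℕ} (hv : v ∈ walkPoints y c) : y ≤ v := by
  induction c generalizing y with
  | nil => simp [walkPoints] at hv
  | cons a c ih =>
    rcases Multiset.mem_cons.1 hv with rfl | hv
    · rfl
    · exact le_of_add_le_left (ih hv)

theorem le_add_sum_of_mem_walkPoints {y v : ℕ} {c : List ℕ} (hv : v ∈ walkPoints y c) :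
    v ≤ y + c.sum := by
  induction c generalizing y with
  | nil => simp [walkPoints] at hv
  | cons a c ih =>
    rw [List.sum_cons, ← add_assoc]
    rcases Multiset.mem_cons.1 hv with rfl | hv
    · omega
    · exact ih hv

theorem start_eq_of_walkPoints_eq {y y' : ℕ} {c c' : List ℕ} (hc : c ≠ [])
    (h : walkPoints y c = walkPoints y' c') : y = y' := by
  have hc' : c' ≠ [] := by
    rw [← List.length_pos_iff, ← card_walkPoints y', ← h, card_walkPoints]
    exact List.length_pos_iff.2 hc
  exact le_antisymm (le_of_mem_walkPoints (h ▸ start_mem_walkPoints y' hc'))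
    (le_of_mem_walkPoints (h ▸ start_mem_walkPoints y hc))

theorem eq_of_walkPoints_eq {y y' : ℕ} {c c' : List ℕ}
    (h : walkPoints y c = walkPoints y' c') (hsum : y + c.sum = y' + c'.sum) :
    c = c' := by
  induction c generalizing y y' c' with
  | nil => simpa using (congrArg Multiset.card h).symm
  | cons a c ih =>
    obtain _ | ⟨a', c'⟩ := c'
    · simpa using congrArg Multiset.card h
    obtain rfl := start_eq_of_walkPoints_eq (List.cons_ne_nil a c) h
    obtain rfl := ih ((Multiset.cons_inj_right y).1 h) (by simpa [add_assoc] using hsum)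
    simpa using hsum

theorem exists_walkPoints_eq_of_isChain {a N : ℕ} {v : List ℕ} (hv : (a :: v).IsChain (· ≤ ·))
    (hN : ∀ w ∈ a :: v, w ≤ N) :
    ∃ c : List ℕ, walkPoints a c = ↑(a :: v) ∧ a + c.sum = N := by
  induction v generalizing a with
  | nil =>
    exact ⟨[N - a], rfl, Nat.add_sub_cancel' (hN a (List.mem_singleton_self a))⟩
  | cons b v ih =>
    obtain ⟨hab, hv⟩ := List.isChain_cons_cons.1 hv
    obtain ⟨c, hc, hsum⟩ := ih hv fun w hw ↦ hN w (List.mem_cons_of_mem _ hw)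
    refine ⟨(b - a) :: c, ?_, ?_⟩
    · rw [walkPoints, Nat.cast_id, Nat.add_sub_cancel' hab, hc]
      rfl
    · rw [List.sum_cons]
      omega

theorem exists_append_cons_of_sum {a N : ℕ} {c : List ℕ} (ha : a < N) (hN : N ≤ a + c.sum) :
    ∃ p b q, c = p ++ b :: q ∧ a + p.sum < N ∧ N ≤ a + p.sum + b := by
  induction c generalizing a with
  | nil => simp only [List.sum_nil] at hN; omega
  | cons b c ih =>
    rcases le_or_gt N (a + b) with hb | hb
    · exact ⟨[], b, c, rfl, by simpa, by simpa⟩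
    · obtain ⟨p, b', q, rfl, hp, hq⟩ := ih hb (by simpa [add_assoc] using hN)
      exact ⟨b :: p, b', q, rfl, by simpa [add_assoc] using hp, by simpa [add_assoc] using hq⟩

end Nat

section ZMod

variable {n : ℕ}

theorem walkPoints_swap_append (x : ZMod n) {p q : List ℕ} (hsum : (p ++ q).sum = n) :
    walkPoints (x + p.sum) (q ++ p) = walkPoints x (p ++ q) := by
  have hclosed : (p.sum + q.sum : ZMod n) = 0 := by
    rw [← Nat.cast_add, ← List.sum_append, hsum, ZMod.natCast_self]
  rw [walkPoints_append, walkPoints_append, add_assoc x, hclosed, add_zero, add_comm]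

theorem map_val_walkPoints {y : ℕ} {c : List ℕ} (hlt : ∀ v ∈ walkPoints y c, v < n) :
    (walkPoints (y : ZMod n) c).map ZMod.val = walkPoints y c := by
  rw [← map_natCast_walkPoints, Multiset.map_map]
  exact (Multiset.map_congr rfl fun v hv ↦ ZMod.val_cast_of_lt (hlt v hv)).trans
    (Multiset.map_id _)

variable [NeZero n]

theorem exists_walkPoints_eq {s : Multiset (ZMod n)} (hs : s ≠ 0) :
    ∃ (x : ZMod n) (c : List ℕ), walkPoints x c = s ∧ c.sum = n := by
  obtain ⟨a, v, hav⟩ : ∃ a v, (s.map ZMod.val).sort (· ≤ ·) = a :: v :=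
    List.exists_cons_of_ne_nil (by simpa [← Multiset.coe_eq_zero] using hs)
  have hcoe : s.map ZMod.val = ↑(a :: v) := by rw [← hav, Multiset.sort_eq]
  have hlt : ∀ w ∈ a :: v, w ≤ a + n := by
    intro w hw
    obtain ⟨z, -, rfl⟩ := Multiset.mem_map.1 (hcoe ▸ Multiset.mem_coe.2 hw)
    exact (ZMod.val_lt z).le.trans (Nat.le_add_left n a)
  have hchain : (a :: v).IsChain (· ≤ ·) := hav ▸ (Multiset.pairwise_sort _ _).isChain
  obtain ⟨c, hc, hsum⟩ := exists_walkPoints_eq_of_isChain hchain hlt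
  refine ⟨a, c, ?_, Nat.add_left_cancel hsum⟩
  rw [← map_natCast_walkPoints, hc, ← hcoe, Multiset.map_map]
  simp

theorem exists_append_forall_walkPoints_lt (x : ZMod n) {c : List ℕ} (hsum : c.sum = n) :
    ∃ (p q : List ℕ) (y : ℕ), c = p ++ q ∧ (y : ZMod n) = x + p.sum ∧
      ∀ v ∈ walkPoints y (q ++ p), v < n := by
  obtain ⟨p, b, q, rfl, hp, hb⟩ :=
    exists_append_cons_of_sum (ZMod.val_lt x) (hsum.symm.le.trans (Nat.le_add_left _ _))
  simp only [List.sum_append, List.sum_cons] at hsum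
  obtain ⟨y, hy⟩ := Nat.exists_eq_add_of_le hb
  refine ⟨p ++ [b], q, y, by simp, ?_, fun v hv ↦ ?_⟩
  · simpa [add_assoc] using (congrArg (Nat.cast : ℕ → ZMod n) hy).symm
  · rw [← List.append_assoc, walkPoints_append, Multiset.mem_add] at hv
    have hv' : v ≤ y + (q ++ p).sum := by
      rcases hv with hv | hv
      · exact le_add_sum_of_mem_walkPoints hv
      · simp only [walkPoints, Multiset.mem_cons, Multiset.notMem_zero, or_false] at hv
        exact hv.le
    rw [List.sum_append] at hv'
    omega

theorem exists_append_of_walkPoints_eq {x x' : ZMod n} {c c' : List ℕ} (hsum : c.sum = n)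
    (hsum' : c'.sum = n) (h : walkPoints x c = walkPoints x' c') :
    ∃ u v, c = u ++ v ∧ c' = v ++ u ∧ x' = x + u.sum := by
  obtain ⟨p, q, y, rfl, hy, hlt⟩ := exists_append_forall_walkPoints_lt x hsum
  obtain ⟨p', q', y', rfl, hy', hlt'⟩ := exists_append_forall_walkPoints_lt x' hsum'
  have hpoints : walkPoints y (q ++ p) = walkPoints y' (q' ++ p') := by
    rw [← map_val_walkPoints hlt, ← map_val_walkPoints hlt', hy, hy',
      walkPoints_swap_append x hsum, walkPoints_swap_append x' hsum', h]
  rw [List.sum_append] at hsum hsum'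
  have hne : q ++ p ≠ [] := fun hnil ↦
    NeZero.ne n (by rw [← hsum, Nat.add_comm, ← List.sum_append, hnil, List.sum_nil])
  obtain rfl := start_eq_of_walkPoints_eq hne hpoints
  have hnormal : q ++ p = q' ++ p' := eq_of_walkPoints_eq hpoints
    (by simp only [List.sum_append]; omega)
  have hx : x + p.sum = x' + p'.sum := hy.symm.trans hy'
  have hn : (p.sum + q.sum : ZMod n) = 0 := by rw [← Nat.cast_add, hsum, ZMod.natCast_self]
  rcases List.append_eq_append_iff.1 hnormal with ⟨r, rfl, rfl⟩ | ⟨r, rfl, rfl⟩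
  · refine ⟨r, p' ++ q, by simp, by simp, ?_⟩
    rw [List.sum_append, Nat.cast_add] at hx
    linear_combination -hx
  · refine ⟨p ++ q', r, by simp, by simp, ?_⟩
    rw [List.sum_append, Nat.cast_add] at hx hn ⊢
    linear_combination -hx - hn

end ZMod

end WalkPoints

section TransitionDigraph

open Equiv Relation

/-- A word `l` of `t - 1` gaps together with a last gap `f` that goes around `ZMod n` once and in
which `f` is the gap singled out by the rule `sel`. Such words represent the `t`-multisets of
`ZMod n` up to translation, cut open at the selected gap. -/
structure IsGapWord (n t : ℕ) (sel : Multiset ℕ → ℕ) (l : List ℕ) (f : ℕ) : Prop where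
  length_add_one : l.length + 1 = t
  sum_add : l.sum + f = n
  sel_eq : sel (f ::ₘ ↑l) = f

/-- The edges of the transition digraph, whose vertices are the pairs of a point of `ZMod n` and a
list of `t - 2` gaps. The edge `e` stands for the `t`-multiset `e.points` and leads from the
vertex `e.tail` to the vertex `e.head`. -/
@[ext]
structure TransitionEdge (n t : ℕ) (sel : Multiset ℕ → ℕ) where
  start : ZMod n
  gaps : List ℕ
  last : ℕ
  isGapWord : IsGapWord n t sel gaps last

variable {n t : ℕ} {sel : Multiset ℕ → ℕ}

namespace IsGapWord

variable {l : List ℕ} {f : ℕ}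

theorem perm (h : IsGapWord n t sel l f) {l' : List ℕ} (hl : l.Perm l') :
    IsGapWord n t sel l' f where
  length_add_one := hl.length_eq ▸ h.length_add_one
  sum_add := hl.sum_eq ▸ h.sum_add
  sel_eq := Multiset.coe_eq_coe.2 hl ▸ h.sel_eq

theorem count_last (h : IsGapWord n t sel l f)
    (hsel : ∀ D : Multiset ℕ, D.card = t → D.sum = n → D.count (sel D) = 1) :
    (f ::ₘ (l : Multiset ℕ)).count f = 1 := by
  have := hsel (f ::ₘ l) (by simpa using h.length_add_one) (by simpa [add_comm] using h.sum_add)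
  rwa [h.sel_eq] at this

theorem last_notMem (h : IsGapWord n t sel l f)
    (hsel : ∀ D : Multiset ℕ, D.card = t → D.sum = n → D.count (sel D) = 1) : f ∉ l := by
  simpa [List.count_eq_zero] using h.count_last hsel

end IsGapWord

theorem eq_nil_or_eq_nil_of_concat_eq_append {α : Type*} {l l' u v : List α} {f : α} (hf : f ∉ l)
    (h : l ++ [f] = u ++ v) (h' : l' ++ [f] = v ++ u) : u = [] ∨ v = [] := by
  rcases List.eq_nil_or_concat' u with rfl | ⟨u, a, rfl⟩
  · exact .inl rfl
  rcases List.eq_nil_or_concat' v with rfl | ⟨v, b, rfl⟩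
  · exact .inr rfl
  simp only [← List.append_assoc, List.append_singleton_inj] at h h'
  exact absurd (by simp [h.1, h'.2]) hf

namespace TransitionEdge

/-- The multiset represented by an edge. -/
def points (e : TransitionEdge n t sel) : Multiset (ZMod n) :=
  walkPoints e.start (e.gaps ++ [e.last])

/-- The vertex that an edge leaves: its starting point and all its gaps but the last two. -/
def tail (e : TransitionEdge n t sel) : ZMod n × List ℕ :=
  (e.start, e.gaps.dropLast)

/-- The vertex that an edge enters: its second point and the gaps following it, up to but excluding
the last one. -/
def head (e : TransitionEdge n t sel) : ZMod n × List ℕ :=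
  (e.start + e.gaps.headD 0, e.gaps.tail)

/-- The edge obtained by rotating all gaps but the last one. It continues the given edge, so that
the transition digraph decomposes into closed trails. -/
def rotate (e : TransitionEdge n t sel) : TransitionEdge n t sel where
  start := e.start + e.gaps.headD 0
  gaps := e.gaps.rotate 1
  last := e.last
  isGapWord := e.isGapWord.perm (List.rotate_perm _ _).symm

theorem tail_rotate (e : TransitionEdge n t sel) : e.rotate.tail = e.head := by
  obtain ⟨x, _ | ⟨a, l⟩, f, h⟩ := e <;> simp [rotate, tail, head]

theorem rotate_injective :
    (rotate : TransitionEdge n t sel → TransitionEdge n t sel).Injective := by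
  intro e e' h
  simp only [rotate, TransitionEdge.mk.injEq] at h
  obtain ⟨hstart, hgaps, hlast⟩ := h
  have hgaps' := List.rotate_injective 1 hgaps
  rw [hgaps', add_left_inj] at hstart
  exact TransitionEdge.ext hstart hgaps' hlast

theorem card_points (e : TransitionEdge n t sel) : e.points.card = t := by
  simpa [points] using e.isGapWord.length_add_one

/-- The multiset represented by an edge, as a member of the type of all `t`-multisets. -/
def toSym (e : TransitionEdge n t sel) : Sym (ZMod n) t :=
  .mk e.points e.card_points

theorem sum_gaps_append_last (e : TransitionEdge n t sel) : (e.gaps ++ [e.last]).sum = n := by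
  simpa using e.isGapWord.sum_add

variable [NeZero n] (hsel : ∀ D : Multiset ℕ, D.card = t → D.sum = n → D.count (sel D) = 1)
include hsel

theorem points_injective : (points : TransitionEdge n t sel → Multiset (ZMod n)).Injective := by
  intro e e' h
  obtain ⟨u, v, hu, hv, hstart⟩ :=
    exists_append_of_walkPoints_eq e.sum_gaps_append_last e'.sum_gaps_append_last h
  have hperm : (e.last ::ₘ (e.gaps : Multiset ℕ)) = e'.last ::ₘ ↑e'.gaps := by
    simp only [Multiset.cons_coe, Multiset.coe_eq_coe]
    refine (List.perm_append_singleton _ _).symm.trans (.trans ?_ (List.perm_append_singleton _ _))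
    rw [hu, hv]
    exact List.perm_append_comm
  have hlast : e.last = e'.last := by rw [← e.isGapWord.sel_eq, hperm, e'.isGapWord.sel_eq]
  rw [← hlast] at hv
  -- Both words end in the selected gap, which occurs only once, so the rotation is trivial.
  obtain ⟨hgaps, hsum⟩ : e.gaps ++ [e.last] = e'.gaps ++ [e.last] ∧ (u.sum : ZMod n) = 0 := by
    rcases eq_nil_or_eq_nil_of_concat_eq_append (e.isGapWord.last_notMem hsel) hu hv with rfl | rfl
    · exact ⟨by rw [hu, hv, List.nil_append, List.append_nil], by simp⟩
    · rw [List.append_nil] at hu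
      exact ⟨by rw [hu, hv, List.nil_append],
        by rw [← hu, e.sum_gaps_append_last, ZMod.natCast_self]⟩
  exact TransitionEdge.ext (by rw [hstart, hsum, add_zero]) (List.append_cancel_right hgaps) hlast

theorem exists_points_eq (ht : t ≠ 0) {s : Multiset (ZMod n)} (hs : s.card = t) :
    ∃ e : TransitionEdge n t sel, e.points = s := by
  obtain ⟨x, c, rfl, hsum⟩ := exists_walkPoints_eq (s := s) (by rintro rfl; exact ht hs.symm)
  rw [card_walkPoints] at hs
  have hmem : sel c ∈ c := by
    have := hsel c hs (by simpa using hsum)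
    exact Multiset.mem_coe.1 (Multiset.count_pos.1 (this ▸ one_pos))
  obtain ⟨p, q, hc⟩ := List.append_of_mem hmem
  have hc' : c = (p ++ [sel c]) ++ q := by simpa using hc
  have hperm : (sel c ::ₘ ↑(q ++ p) : Multiset ℕ) = c := by
    nth_rw 2 [hc]
    simp only [Multiset.cons_coe, Multiset.coe_eq_coe]
    exact (List.perm_append_comm.cons _).trans List.perm_middle.symm
  refine ⟨⟨x + (p ++ [sel c]).sum, q ++ p, sel c, ?_, ?_, ?_⟩, ?_⟩
  · rw [← hs, ← Multiset.coe_card c, ← congrArg Multiset.card hperm, Multiset.card_cons,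
      Multiset.coe_card]
  · rw [← hsum, ← Multiset.sum_coe c, ← congrArg Multiset.sum hperm, Multiset.sum_cons,
      Multiset.sum_coe, add_comm]
  · exact congrArg sel hperm
  · rw [points, List.append_assoc, walkPoints_swap_append x (hc' ▸ hsum), ← hc']

theorem toSym_bijective (ht : t ≠ 0) :
    (toSym : TransitionEdge n t sel → Sym (ZMod n) t).Bijective :=
  ⟨fun _ _ h ↦ points_injective hsel (congrArg Subtype.val h), fun s ↦
    (exists_points_eq hsel ht s.card_coe).imp fun _ ↦ Subtype.ext⟩

end TransitionEdge

/-- Two vertices of the transition digraph lie in the same weakly connected component. -/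
def TransitionConnected (n t : ℕ) (sel : Multiset ℕ → ℕ) :
    ZMod n × List ℕ → ZMod n × List ℕ → Prop :=
  EqvGen fun u w ↦ ∃ e : TransitionEdge n t sel, e.tail = u ∧ e.head = w

theorem map_range_start_eq_points {E : ℕ → TransitionEdge n t sel}
    (hE : ∀ k, (E (k + 1)).tail = (E k).head) (k : ℕ) :
    (Multiset.range t).map (fun j ↦ (E (k + j)).start) = (E k).points := by
  have h := map_range_eq_walkPoints (x := fun k ↦ (E k).start) (l := fun k ↦ (E k).gaps)
    (fun k ↦ congrArg Prod.fst (hE k)) (fun k ↦ congrArg Prod.snd (hE k))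
    (List.prefix_refl (E k).gaps) (E k).last
  rwa [(E k).isGapWord.length_add_one] at h

-- The ascription `(j : ZMod _)` in `IsMcycle` casts the whole multiset `Multiset.range t`.
theorem isMcycle_iff {a : ZMod ((n + t - 1).choose t) → Fin n} :
    IsMcycle n t a ↔ ∀ s : Multiset (Fin n), s.card = t →
      ∃! i, (Multiset.range t).map (fun j : ℕ ↦ a (i + (j : ZMod ((n + t - 1).choose t)))) = s := by
  have hcast : (Multiset.range t >>= fun j ↦ pure (j : ZMod ((n + t - 1).choose t))) =
      (Multiset.range t).map Nat.cast := Multiset.bind_singleton _ _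
  simp only [IsMcycle, hcast, Multiset.map_map, Function.comp_def]

theorem exists_isMcycle [NeZero n] (ht : t ≠ 0)
    (hsel : ∀ D : Multiset ℕ, D.card = t → D.sum = n → D.count (sel D) = 1)
    (hconn : ∀ e e' : TransitionEdge n t sel, TransitionConnected n t sel e.tail e'.tail) :
    ∃ a, IsMcycle n t a := by
  have hSym := TransitionEdge.toSym_bijective hsel ht
  have : Finite (TransitionEdge n t sel) := .of_injective _ hSym.injective
  have : Nonempty (TransitionEdge n t sel) := hSym.surjective.nonempty
  have hcard : Nat.card (TransitionEdge n t sel) = (n + t - 1).choose t := by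
    rw [Nat.card_congr (.ofBijective _ hSym), Nat.card_eq_fintype_card, Sym.card_sym_eq_choose,
      ZMod.card]
  obtain ⟨F, hF, hsucc⟩ := exists_eulerCircuit
    (.ofBijective _ (Finite.injective_iff_bijective.1 TransitionEdge.rotate_injective))
    TransitionEdge.tail_rotate hconn hcard
  have hwindow (i : ZMod ((n + t - 1).choose t)) :
      (Multiset.range t).map (fun j : ℕ ↦ (F (i + j)).start) = (F i).points := by
    simpa [add_assoc] using map_range_start_eq_points (E := fun k : ℕ ↦ F (i + k))
      (fun k ↦ by simpa [add_assoc] using hsucc (i + k)) 0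
  let φ : ZMod n ≃ Fin n := (ZMod.finEquiv n).symm
  refine ⟨fun i ↦ φ (F i).start, isMcycle_iff.2 fun s hs ↦ ?_⟩
  have hbij := ((Sym.equivCongr φ).bijective.comp hSym).comp hF
  have hmap (i) : (Multiset.range t).map (fun j : ℕ ↦ φ (F (i + j)).start) = s ↔
      Sym.equivCongr φ (F i).toSym = .mk s hs := by
    rw [← Sym.coe_inj]
    change _ ↔ (F i).points.map φ = s
    rw [← hwindow, Multiset.map_map, Function.comp_def]
  simpa only [hmap, Function.comp_apply] using hbij.existsUnique (.mk s hs)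

end TransitionDigraph

section SelectedGap

open Multiset

section UniqueElements

variable {α : Type*} [DecidableEq α] {D : Multiset α}

theorem dvd_sum_map_of_forall_dvd_count {d : ℕ} (h : ∀ v, d ∣ D.count v) (g : α → ℕ) :
    d ∣ (D.map g).sum := by
  rw [Finset.sum_multiset_map_count]
  exact Finset.dvd_sum fun v _ ↦ (h v).mul_right (g v)

theorem count_add_card_filter_ne (D : Multiset α) (v : α) :
    D.count v + (D.filter (· ≠ v)).card = D.card := by
  rw [count, ← countP_eq_card_filter, card_eq_countP_add_countP (v = ·) D]
  simp only [ne_eq, eq_comm]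

theorem count_filter_ne_one (h : ∀ v, D.count v ≠ 1) (p : α → Prop) [DecidablePred p] (v : α) :
    (D.filter p).count v ≠ 1 := by
  rw [count_filter]
  split_ifs
  exacts [h v, zero_ne_one]

theorem card_ne_one_of_forall_count_ne_one (h : ∀ v, D.count v ≠ 1) : D.card ≠ 1 := by
  intro hcard
  obtain ⟨v, rfl⟩ := card_eq_one.1 hcard
  exact h v (count_singleton_self v)

end UniqueElements

variable {D : Multiset ℕ}

theorem exists_count_eq_one (hcard : D.card = 6) (hsum : D.sum.Coprime 6) :
    ∃ v, D.count v = 1 := by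
  by_contra! h
  have hnot_dvd (d : ℕ) (hd : d ∣ 6) (hd1 : d ≠ 1) : ∃ v, ¬ d ∣ D.count v := by
    by_contra! hdvd
    have hdsum : d ∣ D.sum := by simpa using dvd_sum_map_of_forall_dvd_count hdvd id
    exact hd1 (Nat.eq_one_of_dvd_coprimes hsum hdsum hd)
  obtain ⟨v, hv⟩ := hnot_dvd 2 (by norm_num) (by norm_num)
  obtain ⟨w, hw⟩ := hnot_dvd 3 (by norm_num) (by norm_num)
  have hwithout (v : ℕ) := count_filter_ne_one h (· ≠ v)
  have hv3 : D.count v = 3 := by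
    have := count_add_card_filter_ne D v
    have := card_ne_one_of_forall_count_ne_one (hwithout v)
    have := h v
    omega
  have hwv : w ≠ v := by
    rintro rfl
    exact hw (hv3 ▸ dvd_rfl)
  -- Removing the three copies of `v` and the two copies of `w` would leave a single gap.
  have := count_add_card_filter_ne D v
  have := count_add_card_filter_ne (D.filter (· ≠ v)) w
  have := card_ne_one_of_forall_count_ne_one (count_filter_ne_one (hwithout v) (· ≠ w))
  have := h w
  rw [count_filter_of_pos (p := (· ≠ v)) hwv] at *
  omega

/-- The selection rule for the transition digraph: the largest gap that occurs exactly once if some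
gap is zero, and the smallest such gap otherwise. -/
noncomputable def selectedGap (D : Multiset ℕ) : ℕ :=
  if 0 ∈ D then sSup {v | D.count v = 1} else sInf {v | D.count v = 1}

theorem bddAbove_setOf_count_eq_one (D : Multiset ℕ) : BddAbove {v | D.count v = 1} :=
  ⟨D.sum, fun _ hv ↦ le_sum_of_mem (count_pos.1 (hv ▸ one_pos))⟩

theorem count_selectedGap (h : ∃ v, D.count v = 1) : D.count (selectedGap D) = 1 := by
  unfold selectedGap
  split_ifs
  exacts [Nat.sSup_mem h (bddAbove_setOf_count_eq_one D), Nat.sInf_mem h]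

theorem le_selectedGap (h0 : 0 ∈ D) {v : ℕ} (hv : D.count v = 1) : v ≤ selectedGap D := by
  rw [selectedGap, if_pos h0]
  exact le_csSup (bddAbove_setOf_count_eq_one D) hv

theorem selectedGap_le (h0 : 0 ∉ D) {v : ℕ} (hv : D.count v = 1) : selectedGap D ≤ v := by
  rw [selectedGap, if_neg h0]
  exact Nat.sInf_le hv

theorem selectedGap_cons_of_forall_lt {v : ℕ} (h0 : 0 ∈ D) (hlt : ∀ w ∈ D, w < v) :
    selectedGap (v ::ₘ D) = v := by
  have hv : (v ::ₘ D).count v = 1 := by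
    rw [count_cons_self, count_eq_zero.2 fun hmem ↦ (hlt v hmem).false]
  have hle := le_selectedGap (mem_cons_of_mem h0) hv
  have hmem := count_pos.1 ((count_selectedGap ⟨v, hv⟩).symm ▸ one_pos)
  rcases mem_cons.1 hmem with h | h
  · exact h
  · exact absurd (hlt _ h) hle.not_gt

end SelectedGap

section Connectivity

variable {n t : ℕ} {sel : Multiset ℕ → ℕ}

namespace TransitionConnected

variable {u v w : ZMod n × List ℕ}

theorem refl (u : ZMod n × List ℕ) : TransitionConnected n t sel u u :=
  Relation.EqvGen.refl u

theorem symm (h : TransitionConnected n t sel u v) : TransitionConnected n t sel v u :=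
  Relation.EqvGen.symm _ _ h

theorem trans (h : TransitionConnected n t sel u v) (h' : TransitionConnected n t sel v w) :
    TransitionConnected n t sel u w :=
  Relation.EqvGen.trans _ _ _ h h'

end TransitionConnected

namespace IsGapWord

theorem connected_cons {a f : ℕ} {l : List ℕ} (h : IsGapWord n t sel (a :: l) f) (x : ZMod n) :
    TransitionConnected n t sel (x, (a :: l).dropLast) (x + a, l) :=
  .rel _ _ ⟨⟨x, a :: l, f, h⟩, rfl, rfl⟩

theorem connected_append {f : ℕ} {p r : List ℕ} (h : IsGapWord n t sel (p ++ r) f) (x : ZMod n) :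
    TransitionConnected n t sel (x, (p ++ r).dropLast) (x + p.sum, (r ++ p).dropLast) := by
  induction p generalizing x r with
  | nil => simpa using TransitionConnected.refl _
  | cons a p ih =>
    have hrotated : IsGapWord n t sel (p ++ (r ++ [a])) f :=
      h.perm (by simpa using (List.perm_append_singleton a (p ++ r)).symm)
    have hrest := ih hrotated (x + a)
    rw [← List.append_assoc, List.dropLast_concat, List.append_assoc, List.singleton_append,
      add_assoc, ← Nat.cast_add, ← List.sum_cons] at hrest
    exact (h.connected_cons x).trans hrest

theorem exists_connected_erase {f y : ℕ} {l : List ℕ} (h : IsGapWord n t sel l f) (hy : y ∈ l)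
    (x : ZMod n) :
    ∃ x' v, (y :: v).Perm l ∧ TransitionConnected n t sel (x, l.dropLast) (x', v) := by
  obtain ⟨p, q, rfl⟩ := List.append_of_mem hy
  refine ⟨x + (p ++ [y]).sum, q ++ p,
    (List.perm_append_comm.cons y).trans List.perm_middle.symm, ?_⟩
  rw [List.append_cons] at h ⊢
  simpa only [← List.append_assoc, List.dropLast_concat] using h.connected_append x

theorem of_forall_lt {f : ℕ} {l : List ℕ} (hlength : l.length + 1 = t) (hsum : l.sum + f = n)
    (h0 : 0 ∈ l) (hlt : ∀ w ∈ l, w < f) : IsGapWord n t selectedGap l f :=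
  ⟨hlength, hsum, selectedGap_cons_of_forall_lt h0 hlt⟩

end IsGapWord

/-- The vertex of the transition digraph to which all vertices turn out to be connected. -/
def originVertex (n t : ℕ) : ZMod n × List ℕ :=
  (0, List.replicate (t - 2) 0)

theorem connected_append_replicate_zero {k : ℕ} {v : List ℕ} (hlength : v.length + k + 2 = t)
    (hlt : ∀ w ∈ v, w + v.sum < n) (x : ZMod n) :
    TransitionConnected n t selectedGap (x, v ++ List.replicate k 0)
      (x + v.sum, List.replicate (v.length + k) 0) := by
  induction v generalizing x k with
  | nil => simpa using TransitionConnected.refl _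
  | cons a v ih =>
    simp only [List.mem_cons, forall_eq_or_imp, List.sum_cons, List.length_cons] at hlt hlength
    -- The remaining gap exceeds all others, and the rule selects it because of the zero appended.
    have hword : IsGapWord n t selectedGap (a :: (v ++ List.replicate (k + 1) 0))
        (n - (a + v.sum)) := by
      refine .of_forall_lt ?_ ?_ ?_ fun w hw ↦ ?_
      · grind
      · grind [List.sum_replicate]
      · simp
      · simp only [List.mem_cons, List.mem_append, List.mem_replicate] at hw
        rcases hw with rfl | hw | ⟨-, rfl⟩
        · omega
        · have := hlt.2 w hw
          omega
        · omega
    have hlt' : ∀ w ∈ v, w + v.sum < n := fun w hw ↦ by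
      have := hlt.2 w hw
      omega
    have hfirst := hword.connected_cons x
    have hrest := ih (k := k + 1) (by omega) hlt' (x + a)
    rw [List.replicate_succ', ← List.append_assoc, ← List.cons_append, List.dropLast_concat,
      List.append_assoc, ← List.replicate_succ'] at hfirst
    simpa [add_assoc, add_comm, add_left_comm] using TransitionConnected.trans hfirst hrest

section

variable (ht : 3 ≤ t) (hn : 3 ≤ n)
include ht hn

theorem connected_add_one_replicate_zero (x : ZMod n) :
    TransitionConnected n t selectedGap (x, List.replicate (t - 2) 0)
      (x + 1, List.replicate (t - 2) 0) := by
  have hword : IsGapWord n t selectedGap ((List.replicate (t - 2) 0 ++ [1]) ++ []) (n - 1) := by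
    refine .of_forall_lt ?_ ?_ ?_ fun w hw ↦ ?_
    · grind
    · grind [List.sum_replicate]
    · grind
    · grind
  simpa using hword.connected_append x

theorem connected_replicate_zero_originVertex (x : ZMod n) :
    TransitionConnected n t selectedGap (x, List.replicate (t - 2) 0) (originVertex n t) := by
  have : NeZero n := ⟨by omega⟩
  rw [← ZMod.natCast_zmod_val x]
  induction x.val with
  | zero => simpa [originVertex] using TransitionConnected.refl _
  | succ k ih =>
    rw [Nat.cast_succ]
    exact (connected_add_one_replicate_zero ht hn k).symm.trans ih

theorem IsGapWord.connected_originVertex_of_pos {f : ℕ} {l : List ℕ}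
    (h : IsGapWord n t selectedGap l f) (hf : 0 < f) (x : ZMod n) :
    TransitionConnected n t selectedGap (x, l.dropLast) (originVertex n t) := by
  have hlength := h.length_add_one
  have hsum := h.sum_add
  obtain ⟨y, hy, hmax⟩ := l.toFinset.exists_max_image id
    (List.toFinset_nonempty_iff _ |>.2 (List.ne_nil_of_length_pos (by omega)))
  obtain ⟨x', v, hperm, hv⟩ := h.exists_connected_erase (List.mem_toFinset.1 hy) x
  rw [← hperm.length_eq, List.length_cons] at hlength
  rw [← hperm.sum_eq, List.sum_cons] at hsum
  have hle : ∀ w ∈ v, w ≤ y := fun w hw ↦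
    hmax w (List.mem_toFinset.2 (hperm.subset (List.mem_cons_of_mem _ hw)))
  -- As `y` is maximal, no gap in `v` reaches the sum of the two missing gaps `y` and `f`.
  have hzero := connected_append_replicate_zero (k := 0) (by omega)
    (fun w hw ↦ by have := hle w hw; omega) x'
  simp only [List.replicate_zero, List.append_nil, Nat.add_zero,
    show v.length = t - 2 by omega] at hzero
  exact (hv.trans hzero).trans (connected_replicate_zero_originVertex ht hn _)

theorem connected_originVertex_of_selectedGap_eq {u w : ℕ} {v : List ℕ} (hlength : v.length + 2 = t)
    (hu : 0 < u) (hsum : u + w + v.sum = n) (hsel : selectedGap (u ::ₘ w ::ₘ v) = u)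
    (x : ZMod n) : TransitionConnected n t selectedGap (x, v) (originVertex n t) := by
  have hword : IsGapWord n t selectedGap (v ++ [w]) u := by
    refine ⟨by simpa using hlength, by grind, ?_⟩
    convert hsel using 2
    simp
  simpa using hword.connected_originVertex_of_pos ht hn hu x

theorem connected_originVertex_of_selectedGap_eq_or {u w : ℕ} {v : List ℕ}
    (hlength : v.length + 2 = t) (hu : 0 < u) (hw : 0 < w) (hsum : u + w + v.sum = n)
    (hsel : selectedGap (u ::ₘ w ::ₘ v) = u ∨ selectedGap (u ::ₘ w ::ₘ v) = w) (x : ZMod n) :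
    TransitionConnected n t selectedGap (x, v) (originVertex n t) := by
  rcases hsel with hsel | hsel
  · exact connected_originVertex_of_selectedGap_eq ht hn hlength hu hsum hsel x
  · exact connected_originVertex_of_selectedGap_eq ht hn hlength hw
      (by rwa [add_comm w u]) (by rwa [Multiset.cons_swap]) x

end

section Six

theorem IsGapWord.count_ne_one_of_last_eq_zero {l : List ℕ} (h : IsGapWord n t selectedGap l 0)
    (h0 : 0 ∉ l) (v : ℕ) : l.count v ≠ 1 := by
  intro hv
  have hpos : 0 < v := Nat.pos_of_ne_zero fun hzero ↦
    h0 (hzero ▸ List.count_pos_iff.1 (hv ▸ one_pos))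
  have hle : v ≤ selectedGap (0 ::ₘ ↑l) := le_selectedGap (Multiset.mem_cons_self _ _)
    (by rw [Multiset.count_cons_of_ne hpos.ne', Multiset.coe_count, hv])
  rw [h.sel_eq] at hle
  omega

theorem exists_perm_of_odd_count_one {l : List ℕ} (hlength : l.length = 5) (hsum : l.sum ≠ 5)
    (hl : ∀ v, l.count v ≠ 1) (hodd : Odd (l.count 1)) : ∃ y, l.Perm [y, y, 1, 1, 1] := by
  obtain ⟨y, hy, hy1⟩ : ∃ y ∈ l, y ≠ 1 := by
    by_contra! h
    exact hsum (by rw [List.eq_replicate_of_mem h, hlength]; rfl)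
  have hcount1 : 3 ≤ l.count 1 := by
    have := hl 1
    have := hodd.pos
    grind
  have hcounty : 2 ≤ l.count y := by
    have := hl y
    have := List.count_pos_iff.2 hy
    omega
  have hle : (↑[y, y, 1, 1, 1] : Multiset ℕ) ≤ ↑l := by
    refine Multiset.le_iff_count.2 fun w ↦ ?_
    rcases eq_or_ne w y with rfl | hwy
    · simpa [hy1.symm] using hcounty
    rcases eq_or_ne w 1 with rfl | hw1
    · simpa [hwy.symm] using hcount1
    · simp [hwy.symm, hw1.symm]
  refine ⟨y, Multiset.coe_eq_coe.1 (Multiset.eq_of_le_of_card_le hle ?_).symm⟩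
  simp [hlength]

theorem selectedGap_one_cons_sub_one_cons {y : ℕ} (hy : 4 ≤ y) :
    selectedGap (1 ::ₘ (y - 1) ::ₘ ↑[y, 1, 1, 1]) = y - 1 := by
  set D : Multiset ℕ := 1 ::ₘ (y - 1) ::ₘ ↑[y, 1, 1, 1] with hD
  have hunique : D.count (y - 1) = 1 := by
    have h1 : 1 ≠ y - 1 := by omega
    have h2 : y ≠ y - 1 := by omega
    simp [hD, h1, h2]
  have hle : selectedGap D ≤ y - 1 := selectedGap_le (by grind [Multiset.mem_coe]) hunique
  have hcount := count_selectedGap ⟨_, hunique⟩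
  have hmem : selectedGap D ∈ D := Multiset.count_pos.1 (hcount ▸ one_pos)
  have hne : selectedGap D ≠ 1 := by
    intro h
    have h1 : y - 1 ≠ 1 := by omega
    rw [h] at hcount
    simp [hD, List.count_cons, h1] at hcount
  have hvalues : ∀ g ∈ D, g = 1 ∨ g = y - 1 ∨ g = y := by simp [hD]
  have := hvalues _ hmem
  omega

theorem count_selectedGap_of_coprime_six (hcoprime : n.Coprime 6) {D : Multiset ℕ}
    (hcard : D.card = 6) (hsum : D.sum = n) : D.count (selectedGap D) = 1 :=
  count_selectedGap (exists_count_eq_one hcard (hsum ▸ hcoprime))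

theorem IsGapWord.connected_originVertex_of_perm {l : List ℕ} {y : ℕ}
    (h : IsGapWord n 6 selectedGap l 0) (hperm : l.Perm [y, y, 1, 1, 1]) (hy : 4 ≤ y) (x : ZMod n) :
    TransitionConnected n 6 selectedGap (x, l.dropLast) (originVertex n 6) := by
  have hsum : y + (y + 3) = n := by simpa [hperm.sum_eq] using h.sum_add
  obtain ⟨x', v, hv, hconn⟩ := h.exists_connected_erase (hperm.mem_iff.2 List.mem_cons_self) x
  have hv' : v.Perm [y, 1, 1, 1] := (hv.trans hperm).cons_inv
  refine hconn.trans (connected_originVertex_of_selectedGap_eq_or (u := 1) (w := y - 1)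
    (by norm_num) (by omega) ?_ one_pos (by omega) ?_ (.inr ?_) x')
  · simp [hv'.length_eq]
  · grind [hv'.sum_eq]
  · rw [Multiset.coe_eq_coe.2 hv', selectedGap_one_cons_sub_one_cons hy]

theorem IsGapWord.connected_originVertex_of_odd_count {l : List ℕ} {y : ℕ}
    (h : IsGapWord n 6 selectedGap l 0) (hcoprime : n.Coprime 6) (hn : 3 ≤ n)
    (hl : ∀ v, l.count v ≠ 1) (hodd : Odd (l.count y)) (hy : 2 ≤ y) (x : ZMod n) :
    TransitionConnected n 6 selectedGap (x, l.dropLast) (originVertex n 6) := by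
  obtain ⟨x', v, hperm, hv⟩ := h.exists_connected_erase (List.count_pos_iff.1 hodd.pos) x
  have hlength := h.length_add_one
  have hsum := h.sum_add
  rw [← hperm.length_eq, List.length_cons] at hlength
  rw [← hperm.sum_eq, List.sum_cons] at hsum
  have hv1 (w : ℕ) : v.count w ≠ 1 := by
    have hw := hl w
    rw [← hperm.count_eq, List.count_cons] at hw hodd
    grind
  -- Replacing the gaps `0` and `y` by `1` and `y - 1` makes the rule select one of these two, since
  -- the other gaps still repeat.
  have hcount := count_selectedGap_of_coprime_six hcoprime (D := 1 ::ₘ (y - 1) ::ₘ ↑v)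
    (by simp only [Multiset.card_cons, Multiset.coe_card]; omega)
    (by simp only [Multiset.sum_cons, Multiset.sum_coe]; omega)
  refine hv.trans (connected_originVertex_of_selectedGap_eq_or (u := 1) (w := y - 1)
    (by norm_num) hn (by omega) one_pos (by omega) (by omega) ?_ x')
  by_contra! hne
  rw [Multiset.count_cons_of_ne hne.1, Multiset.count_cons_of_ne hne.2, Multiset.coe_count]
    at hcount
  exact hv1 _ hcount

theorem IsGapWord.connected_originVertex {l : List ℕ} {f : ℕ} (h : IsGapWord n 6 selectedGap l f)
    (hcoprime : n.Coprime 6) (hn : 11 ≤ n) (x : ZMod n) :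
    TransitionConnected n 6 selectedGap (x, l.dropLast) (originVertex n 6) := by
  rcases Nat.eq_zero_or_pos f with rfl | hf
  · have hlength : l.length = 5 := by simpa using h.length_add_one
    have hsum : l.sum = n := h.sum_add
    have h0 : 0 ∉ l := h.last_notMem fun _ ↦ count_selectedGap_of_coprime_six hcoprime
    have hl := h.count_ne_one_of_last_eq_zero h0
    obtain ⟨y, hodd⟩ : ∃ y, Odd (l.count y) := by
      by_contra! heven
      have h2 := dvd_sum_map_of_forall_dvd_count (D := (l : Multiset ℕ))
        (fun v ↦ even_iff_two_dvd.1 (by simpa using heven v)) fun _ ↦ 1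
      simp [hlength] at h2
    have hy0 : y ≠ 0 := fun hzero ↦ h0 (hzero ▸ List.count_pos_iff.1 hodd.pos)
    rcases eq_or_ne y 1 with rfl | hy1
    · obtain ⟨y, hperm⟩ := exists_perm_of_odd_count_one hlength (by omega) hl hodd
      have : y + (y + 3) = n := by simpa [hperm.sum_eq] using hsum
      exact h.connected_originVertex_of_perm hperm (by omega) x
    · exact h.connected_originVertex_of_odd_count hcoprime (by omega) hl hodd (by omega) x
  · exact h.connected_originVertex_of_pos (by norm_num) (by omega) hf x

end Six

end Connectivity

theorem six_mcycle_exists (n : ℕ) (hn : 11 ≤ n) (h6 : Nat.gcd n 6 = 1) :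
    ∃ a : ZMod ((n + 6 - 1).choose 6) → Fin n, IsMcycle n 6 a := by
  have : NeZero n := ⟨by omega⟩
  have hconn (e : TransitionEdge n 6 selectedGap) :
      TransitionConnected n 6 selectedGap e.tail (originVertex n 6) :=
    e.isGapWord.connected_originVertex h6 hn e.start
  exact exists_isMcycle (by norm_num) (fun _ ↦ count_selectedGap_of_coprime_six h6)
    fun e e' ↦ (hconn e).trans (hconn e').symm
end
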